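/- arXiv:2410.16750 — 6 statements merged into one kernel-verified Lean document; each statement's English description precedes it below -/
import Mathlib

section
/- Let d_z, d_x ≥ 1, m ∈ ℝ^{d_z}, let D be a d_z×d_z real symmetric positive definite matrix, let W be a real d_x×d_z matrix, b, x ∈ ℝ^{d_x}, and c > 0. Then ∫_{ℝ^{d_z}} det(2πD)^{-1/2} exp(−(1/2)(z−m)ᵀ D^{-1} (z−m)) · log( (2πc²)^{-d_x/2} exp(−‖x − Wz − b‖²/(2c²)) ) dz = (1/(2c²)) ( −tr(W D Wᵀ) − ‖W m + b − x‖² ) − (d_x/2) log(2πc²). -/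
open Real Matrix RealInnerProductSpace MeasureTheory

namespace VaeAux
open ProbabilityTheory

/-- standard normal density -/
noncomputable def g (t : ℝ) : ℝ := gaussianPDFReal 0 1 t

lemma g_eq (t : ℝ) : g t = (2 * π) ^ (-(1/2) : ℝ) * exp (-(1/2) * t ^ 2) := by
  unfold g
  rw [gaussianPDFReal]
  rw [Real.rpow_neg (by positivity), Real.sqrt_eq_rpow]
  simp
  left
  ring

lemma integrable_g_mul {f : ℝ → ℝ} (hf : Integrable f (gaussianReal 0 1)) :
    Integrable (fun t => g t * f t) := by
  rw [gaussianReal_of_var_ne_zero _ one_ne_zero,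
    integrable_withDensity_iff_integrable_smul' (measurable_gaussianPDF _ _)
      (by simp [gaussianPDF_lt_top])] at hf
  simpa [toReal_gaussianPDF, g] using hf

lemma integral_g_mul (f : ℝ → ℝ) :
    ∫ t, g t * f t = ∫ t, f t ∂(gaussianReal 0 1) := by
  rw [integral_gaussianReal_eq_integral_smul one_ne_zero]
  simp [g]

lemma i0 : Integrable g := integrable_gaussianPDFReal _ _
lemma i1 : Integrable (fun t => g t * t) :=
  integrable_g_mul ((memLp_id_gaussianReal 1).integrable (by simp))
lemma i2 : Integrable (fun t => g t * t ^ 2) :=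
  integrable_g_mul ((memLp_id_gaussianReal 2).integrable_sq)
lemma e0 : ∫ t, g t = 1 := integral_gaussianPDFReal_eq_one _ one_ne_zero
lemma e1 : ∫ t, g t * t = 0 := by
  rw [integral_g_mul (fun t => t)]; simp
lemma e2 : ∫ t, g t * t ^ 2 = 1 := by
  rw [integral_g_mul (fun t => t ^ 2)]
  rw [← variance_of_integral_eq_zero (X := fun t : ℝ => t) (by fun_prop) (by simp)]
  simp

variable {n : ℕ}

lemma m0 : Integrable (fun u : Fin n → ℝ => ∏ k, g (u k)) ∧
    ∫ u : Fin n → ℝ, ∏ k, g (u k) = 1 := by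
  constructor
  · exact Integrable.fintype_prod (fun _ => i0)
  · rw [integral_fintype_prod_volume_eq_prod (fun _ => g)]; simp [e0]

lemma m1 (i : Fin n) : Integrable (fun u : Fin n → ℝ => (∏ k, g (u k)) * u i) ∧
    ∫ u : Fin n → ℝ, (∏ k, g (u k)) * u i = 0 := by
  let f : Fin n → ℝ → ℝ := fun k t => g t * (if k = i then t else 1)
  have h : (fun u : Fin n → ℝ => (∏ k, g (u k)) * u i) = fun u => ∏ k, f k (u k) := by
    ext u; simp only [f, Finset.prod_mul_distrib, Finset.prod_ite_eq', Finset.mem_univ, if_true]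
  have hf : ∀ k, Integrable (f k) := by
    intro k
    by_cases hk : k = i
    · simpa [f, hk] using i1
    · simpa [f, hk] using i0
  rw [h]
  refine ⟨Integrable.fintype_prod hf, ?_⟩
  rw [integral_fintype_prod_volume_eq_prod f]
  apply Finset.prod_eq_zero (Finset.mem_univ i)
  simpa [f] using e1

lemma m2 (i j : Fin n) : Integrable (fun u : Fin n → ℝ => (∏ k, g (u k)) * (u i * u j)) ∧
    ∫ u : Fin n → ℝ, (∏ k, g (u k)) * (u i * u j) = if i = j then 1 else 0 := by
  let f : Fin n → ℝ → ℝ :=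
    fun k t => g t * ((if k = i then t else 1) * (if k = j then t else 1))
  have h : (fun u : Fin n → ℝ => (∏ k, g (u k)) * (u i * u j)) = fun u => ∏ k, f k (u k) := by
    ext u; simp only [f, Finset.prod_mul_distrib, Finset.prod_ite_eq', Finset.mem_univ, if_true]
  have hf : ∀ k, Integrable (f k) := by
    intro k
    by_cases hk : k = i <;> by_cases hj : k = j
    · simpa [f, ← hk, ← hj, ← sq] using i2
    · subst hk; simpa [f, hj] using i1
    · subst hj; simpa [f, hk] using i1
    · simpa [f, hk, hj] using i0
  rw [h]
  refine ⟨Integrable.fintype_prod hf, ?_⟩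
  rw [integral_fintype_prod_volume_eq_prod f]
  split_ifs with hij
  · subst hij
    apply Finset.prod_eq_one
    intro k _
    by_cases hk : k = i
    · simpa [f, hk, ← sq] using e2
    · simpa [f, hk] using e0
  · apply Finset.prod_eq_zero (Finset.mem_univ i)
    simpa [f, hij] using e1

/-- second moment of an affine form -/
lemma m3 (r : ℝ) (a : Fin n → ℝ) :
    Integrable (fun u : Fin n → ℝ => (∏ k, g (u k)) * (r - a ⬝ᵥ u) ^ 2) ∧
    ∫ u : Fin n → ℝ, (∏ k, g (u k)) * (r - a ⬝ᵥ u) ^ 2 = r ^ 2 + a ⬝ᵥ a := by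
  have h : (fun u : Fin n → ℝ => (∏ k, g (u k)) * (r - a ⬝ᵥ u) ^ 2) = fun u =>
      (r ^ 2 * (∏ k, g (u k)) - ∑ i, (2 * r * a i) * ((∏ k, g (u k)) * u i)) +
      ∑ i, ∑ j, (a i * a j) * ((∏ k, g (u k)) * (u i * u j)) := by
    ext u
    have : (r - a ⬝ᵥ u) ^ 2 = r ^ 2 - ∑ i, (2 * r * a i) * u i +
        ∑ i, ∑ j, (a i * a j) * (u i * u j) := by
      have h1 : (a ⬝ᵥ u) ^ 2 = ∑ i, ∑ j, (a i * a j) * (u i * u j) := by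
        rw [sq, dotProduct, Finset.sum_mul_sum]
        refine Finset.sum_congr rfl fun i _ => Finset.sum_congr rfl fun j _ => by ring
      have h2 : 2 * r * (a ⬝ᵥ u) = ∑ i, (2 * r * a i) * u i := by
        rw [dotProduct, Finset.mul_sum]
        refine Finset.sum_congr rfl fun i _ => by ring
      rw [← h1, ← h2]; ring
    rw [this, mul_add, mul_sub, Finset.mul_sum, Finset.mul_sum]
    simp_rw [Finset.mul_sum]
    congr 1
    · congr 1
      · ring
      · refine Finset.sum_congr rfl fun i _ => by ring
    · refine Finset.sum_congr rfl fun i _ => Finset.sum_congr rfl fun j _ => by ring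
  have hA : Integrable (fun u : Fin n → ℝ => r ^ 2 * (∏ k, g (u k))) := m0.1.const_mul _
  have hB : ∀ i, Integrable (fun u : Fin n → ℝ => (2 * r * a i) * ((∏ k, g (u k)) * u i)) :=
    fun i => (m1 i).1.const_mul _
  have hC : ∀ i j, Integrable
      (fun u : Fin n → ℝ => (a i * a j) * ((∏ k, g (u k)) * (u i * u j))) :=
    fun i j => (m2 i j).1.const_mul _
  have hB' := integrable_finsetSum Finset.univ (fun i _ => hB i)
  have hC1 : ∀ i, Integrable
      (fun u : Fin n → ℝ => ∑ j, (a i * a j) * ((∏ k, g (u k)) * (u i * u j))) :=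
    fun i => integrable_finsetSum Finset.univ (fun j _ => hC i j)
  have hC' := integrable_finsetSum Finset.univ (fun i _ => hC1 i)
  rw [h]
  refine ⟨(hA.sub hB').add hC', ?_⟩
  have hAB : Integrable (fun u : Fin n → ℝ => r ^ 2 * (∏ k, g (u k)) -
      ∑ i, (2 * r * a i) * ((∏ k, g (u k)) * u i)) := hA.sub hB'
  rw [integral_add hAB hC', integral_sub hA hB', integral_finsetSum _ (fun i _ => hB i),
    integral_finsetSum _ (fun i _ => hC1 i)]
  have : ∀ i, ∫ u : Fin n → ℝ, ∑ j, (a i * a j) * ((∏ k, g (u k)) * (u i * u j)) = a i * a i := by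
    intro i
    rw [integral_finsetSum _ (fun j _ => hC i j)]
    simp_rw [integral_const_mul, (m2 _ _).2]
    simp
  simp_rw [this, integral_const_mul, (m1 _).2, m0.2]
  simp [dotProduct]

/-- The Gaussian expectation after whitening. -/
lemma m4 {d : ℕ} (K s : ℝ) (r : Fin d → ℝ) (M : Matrix (Fin d) (Fin n) ℝ) :
    ∫ u : Fin n → ℝ, (∏ k, g (u k)) * (K - s * ∑ a, (r a - M a ⬝ᵥ u) ^ 2) =
      K - s * (∑ a, r a ^ 2 + (M * Mᵀ).trace) := by
  have h : (fun u : Fin n → ℝ => (∏ k, g (u k)) * (K - s * ∑ a, (r a - M a ⬝ᵥ u) ^ 2)) =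
      fun u => K * (∏ k, g (u k)) - s * ∑ a, (∏ k, g (u k)) * (r a - M a ⬝ᵥ u) ^ 2 := by
    ext u
    rw [← Finset.mul_sum]; ring
  have hs := integrable_finsetSum Finset.univ (fun a _ => (m3 (r a) (M a)).1)
  rw [h, integral_sub (m0.1.const_mul _) (hs.const_mul _), integral_const_mul, integral_const_mul,
    integral_finsetSum _ (fun a _ => (m3 (r a) (M a)).1), m0.2]
  simp_rw [(m3 _ _).2]
  rw [Finset.sum_add_distrib]
  simp [Matrix.trace, Matrix.mul_apply, dotProduct]

/-- Affine change of variables. -/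
lemma cov (m : EuclideanSpace ℝ (Fin n)) (A : Matrix (Fin n) (Fin n) ℝ) (hA : A.det ≠ 0)
    (F : EuclideanSpace ℝ (Fin n) → ℝ) :
    ∫ z, F z = ∫ u : Fin n → ℝ, |A.det| * F (m + WithLp.toLp 2 (A *ᵥ u)) := by
  rw [← integral_add_left_eq_self F m]
  rw [← (PiLp.volume_preserving_toLp (Fin n)).integral_comp
    (MeasurableEquiv.toLp 2 (Fin n → ℝ)).measurableEmbedding]
  rw [integral_const_mul]
  let e : (Fin n → ℝ) ≃ᵐ (Fin n → ℝ) :=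
    ((Matrix.toLin'OfInv (M := A⁻¹) (M' := A) (Matrix.nonsing_inv_mul _ hA.isUnit)
      (Matrix.mul_nonsing_inv _ hA.isUnit)).toContinuousLinearEquiv).toHomeomorph.toMeasurableEquiv
  have he : ∀ u, e u = A *ᵥ u := fun u => Matrix.toLin'_apply A u
  have h1 := integral_map_equiv (μ := volume) e (fun v => F (m + WithLp.toLp 2 v))
  have h2 : Measure.map e volume = ENNReal.ofReal (abs (det A)⁻¹) • volume :=
    Real.map_matrix_volume_pi_eq_smul_volume_pi hA
  rw [h2, integral_smul_measure] at h1
  simp_rw [he] at h1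
  rw [← h1, ENNReal.toReal_ofReal (abs_nonneg _), smul_eq_mul, ← mul_assoc, abs_inv,
    mul_inv_cancel₀ (abs_ne_zero.mpr hA), one_mul]

lemma exists_sqrt (D : Matrix (Fin n) (Fin n) ℝ) (hD : D.PosDef) :
    ∃ A : Matrix (Fin n) (Fin n) ℝ, D = A * Aᵀ ∧ A.det ≠ 0 := by
  open scoped MatrixOrder in
  obtain ⟨B, hB⟩ := CStarAlgebra.nonneg_iff_eq_star_mul_self.mp hD.posSemidef.nonneg
  have h : D = Bᵀ * Bᵀᵀ := by
    rw [hB, Matrix.transpose_transpose, Matrix.star_eq_conjTranspose,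
      Matrix.conjTranspose_eq_transpose_of_trivial]
  refine ⟨Bᵀ, h, fun h0 => hD.det_pos.ne' ?_⟩
  rw [h, Matrix.det_mul, h0, zero_mul]

lemma quad (A : Matrix (Fin n) (Fin n) ℝ) (hA : A.det ≠ 0) (u : Fin n → ℝ) :
    ⟪WithLp.toLp 2 (A *ᵥ u), Matrix.toEuclideanLin (A * Aᵀ)⁻¹ (WithLp.toLp 2 (A *ᵥ u))⟫ =
      ∑ k, u k ^ 2 := by
  rw [Matrix.toEuclideanLin_apply_piLp_toLp, Matrix.mulVec_mulVec, Matrix.mul_inv_rev,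
    Matrix.mul_assoc, Matrix.nonsing_inv_mul _ hA.isUnit, Matrix.mul_one,
    EuclideanSpace.inner_toLp_toLp]
  simp only [star_trivial]
  rw [Matrix.dotProduct_mulVec, ← Matrix.mulVec_transpose, Matrix.mulVec_mulVec,
    Matrix.mul_nonsing_inv _ (by rw [Matrix.det_transpose]; exact hA.isUnit)]
  simp [dotProduct, sq]

lemma dens (A : Matrix (Fin n) (Fin n) ℝ) (hA : A.det ≠ 0) (u : Fin n → ℝ) :
    |A.det| * ((Matrix.det ((2 * π) • (A * Aᵀ))) ^ (-(1 / 2) : ℝ) *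
      Real.exp (-(1 / 2) * ∑ k, u k ^ 2)) = ∏ k, g (u k) := by
  simp_rw [g_eq, Finset.prod_mul_distrib, ← Real.exp_sum, ← Finset.mul_sum]
  rw [← mul_assoc]
  congr 1
  rw [Matrix.det_smul, Matrix.det_mul, Matrix.det_transpose, Finset.prod_const,
    Real.mul_rpow (by positivity) (mul_self_nonneg _)]
  simp only [Finset.card_univ, Fintype.card_fin]
  have h1 : (A.det * A.det) ^ (-(1 / 2) : ℝ) = |A.det|⁻¹ := by
    rw [Real.rpow_neg (mul_self_nonneg _), ← Real.sqrt_eq_rpow, Real.sqrt_mul_self_eq_abs]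
  rw [h1, ← Real.rpow_natCast, ← Real.rpow_natCast, ← Real.rpow_mul (by positivity),
    ← Real.rpow_mul (by positivity), mul_comm (n : ℝ)]
  field_simp

end VaeAux

/-- Reconstruction term of the Linear Gaussian VAE: the expectation under the Gaussian
`N(m, D)` of the log-density of `N(Wz + b, c² I)` evaluated at `x`. -/
theorem stmt_4
    {dx dz : ℕ} (hdx : 1 ≤ dx) (hdz : 1 ≤ dz)
    (m : EuclideanSpace ℝ (Fin dz)) (D : Matrix (Fin dz) (Fin dz) ℝ) (hD : D.PosDef)
    (W : Matrix (Fin dx) (Fin dz) ℝ) (b x : EuclideanSpace ℝ (Fin dx)) (c : ℝ) (hc : 0 < c) :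
    ∫ z : EuclideanSpace ℝ (Fin dz),
        (Matrix.det ((2 * π) • D)) ^ (-(1 / 2) : ℝ) *
          Real.exp (-(1 / 2) * ⟪z - m, Matrix.toEuclideanLin D⁻¹ (z - m)⟫) *
          Real.log ((2 * π * c ^ 2) ^ (-(dx : ℝ) / 2) *
            Real.exp (-‖x - Matrix.toEuclideanLin W z - b‖ ^ 2 / (2 * c ^ 2))) =
      (1 / (2 * c ^ 2)) * (-(W * D * Wᵀ).trace -
          ‖Matrix.toEuclideanLin W m + b - x‖ ^ 2) -
        ((dx : ℝ) / 2) * Real.log (2 * π * c ^ 2) := by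
  obtain ⟨A, rfl, hA⟩ := VaeAux.exists_sqrt D hD
  rw [VaeAux.cov m A hA]
  have hp : (0 : ℝ) < 2 * π * c ^ 2 := by positivity
  have key := VaeAux.m4 (-((dx : ℝ) / 2) * Real.log (2 * π * c ^ 2)) (1 / (2 * c ^ 2))
    (fun a => x a - (W *ᵥ m) a - b a) (W * A)
  have h1 : ‖Matrix.toEuclideanLin W m + b - x‖ ^ 2 =
      ∑ a, (x a - (W *ᵥ m) a - b a) ^ 2 := by
    rw [EuclideanSpace.norm_sq_eq]
    refine Finset.sum_congr rfl fun a _ => ?_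
    simp only [Real.norm_eq_abs, sq_abs, Matrix.toEuclideanLin_apply, PiLp.sub_apply,
      PiLp.add_apply]
    ring
  have h2 : (W * (A * Aᵀ) * Wᵀ).trace = (W * A * (W * A)ᵀ).trace := by
    rw [Matrix.transpose_mul]; simp only [Matrix.mul_assoc]
  have h3 : ∀ u : Fin dz → ℝ,
      ‖x - Matrix.toEuclideanLin W (m + WithLp.toLp 2 (A *ᵥ u)) - b‖ ^ 2 =
      ∑ a, (x a - (W *ᵥ m) a - b a - (W * A) a ⬝ᵥ u) ^ 2 := by
    intro u
    rw [EuclideanSpace.norm_sq_eq]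
    refine Finset.sum_congr rfl fun a _ => ?_
    have : (W * A) a ⬝ᵥ u = (W *ᵥ (A *ᵥ u)) a := by
      rw [Matrix.mulVec_mulVec]; rfl
    rw [this]
    simp only [Real.norm_eq_abs, sq_abs, Matrix.toEuclideanLin_apply, PiLp.sub_apply,
      PiLp.add_apply, WithLp.ofLp_add, Matrix.mulVec_add, Pi.add_apply]
    ring
  rw [h1, h2]
  trans (-((dx : ℝ) / 2) * Real.log (2 * π * c ^ 2) - 1 / (2 * c ^ 2) *
      (∑ a, (x a - (W *ᵥ m) a - b a) ^ 2 + (W * A * (W * A)ᵀ).trace))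
  · rw [← key]
    refine integral_congr_ae (Filter.Eventually.of_forall fun u => ?_)
    beta_reduce
    rw [add_sub_cancel_left, VaeAux.quad A hA, ← mul_assoc, VaeAux.dens A hA,
      Real.log_mul (Real.rpow_pos_of_pos hp _).ne' (Real.exp_pos _).ne', Real.log_exp,
      Real.log_rpow hp, h3]
    ring
  · ring
end

section
/- Let (Z, 𝒵, λ) be a measure space, let p, q : Z → ℝ be measurable functions that are strictly positive λ-a.e., and let M : Z → ℝ be measurable with M ≥ 0. Then ∫ M(z) |p(z) − q(z)| dλ(z) ≤ ∫ M(z) |log p(z) − log q(z)| p(z) dλ(z) + ∫ M(z) |log p(z) − log q(z)| q(z) dλ(z), where all integrals are taken in [0, ∞]. -/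
open MeasureTheory

theorem aux_log {a b : ℝ} (ha : 0 < a) (hb : 0 < b) :
    a - b ≤ (Real.log a - Real.log b) * a := by
  have h := Real.log_le_sub_one_of_pos (div_pos hb ha)
  rw [Real.log_div hb.ne' ha.ne'] at h
  have h2 := mul_le_mul_of_nonneg_right h ha.le
  have h3 : (b / a - 1) * a = b - a := by field_simp
  rw [h3] at h2
  linarith

theorem aux_abs {a b : ℝ} (ha : 0 < a) (hb : 0 < b) :
    |a - b| ≤ |Real.log a - Real.log b| * a + |Real.log a - Real.log b| * b := by
  have h1 := aux_log ha hb
  have h2 := aux_log hb ha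
  have h3 := mul_le_mul_of_nonneg_right (le_abs_self (Real.log a - Real.log b)) ha.le
  have h4 := mul_le_mul_of_nonneg_right (neg_le_abs (Real.log a - Real.log b)) hb.le
  have h5 := mul_nonneg (abs_nonneg (Real.log a - Real.log b)) ha.le
  have h6 := mul_nonneg (abs_nonneg (Real.log a - Real.log b)) hb.le
  rw [abs_le]
  constructor <;> linarith

/-- Weighted total-variation-type bound: for a.e.-positive densities `p, q` and a
nonnegative weight `M`, `∫ M |p − q| ≤ ∫ M |log p − log q| p + ∫ M |log p − log q| q`
(all integrals in `[0, ∞]`). -/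
theorem stmt_6
    {Z : Type*} [MeasurableSpace Z] (lam : Measure Z)
    (p q M : Z → ℝ) (hp : Measurable p) (hq : Measurable q) (hM : Measurable M)
    (hMpos : ∀ z, 0 ≤ M z)
    (hppos : ∀ᵐ z ∂lam, 0 < p z) (hqpos : ∀ᵐ z ∂lam, 0 < q z) :
    ∫⁻ z, ENNReal.ofReal (M z * |p z - q z|) ∂lam ≤
      ∫⁻ z, ENNReal.ofReal (M z * |Real.log (p z) - Real.log (q z)| * p z) ∂lam +
      ∫⁻ z, ENNReal.ofReal (M z * |Real.log (p z) - Real.log (q z)| * q z) ∂lam := by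
  rw [← lintegral_add_left (by fun_prop)]
  apply lintegral_mono_ae
  filter_upwards [hppos, hqpos] with z ha hb
  have hM0 := hMpos z
  rw [← ENNReal.ofReal_add (by positivity) (by positivity)]
  apply ENNReal.ofReal_le_ofReal
  have h := mul_le_mul_of_nonneg_left (aux_abs ha hb) hM0
  linarith
end

section
/- Let K ≥ 1 be an integer, let Θ be a subset of a normed vector space, and let w₁, …, w_K : Θ → ℝ be functions for which there exist constants 0 < α₋ ≤ α₊ and M ≥ 0 such that for every ℓ ∈ {1, …, K} and all θ, θ' ∈ Θ: α₋ ≤ w_ℓ(θ) ≤ α₊ and |w_ℓ(θ) − w_ℓ(θ')| ≤ α₊ M ‖θ − θ'‖. Define the normalized importance weights w̃_ℓ(θ) = w_ℓ(θ) / ∑_{j=1}^{K} w_j(θ). Then for every ℓ and all θ, θ' ∈ Θ: |w̃_ℓ(θ) − w̃_ℓ(θ')| ≤ (1/K) (α₊/α₋) M ‖θ − θ'‖ + (2/K) (α₊/α₋)³ M ‖θ − θ'‖. -/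
open Finset

/-- Lipschitz continuity of the self-normalized importance weights of the IWAE. -/
theorem stmt_7
    {E : Type*} [NormedAddCommGroup E] [NormedSpace ℝ E]
    {K : ℕ} (hK : 1 ≤ K) (Θ : Set E)
    (w : Fin K → E → ℝ) (αm αp M : ℝ)
    (hαm : 0 < αm) (hαmp : αm ≤ αp) (hM : 0 ≤ M)
    (hbound : ∀ ℓ, ∀ θ ∈ Θ, αm ≤ w ℓ θ ∧ w ℓ θ ≤ αp)
    (hlip : ∀ ℓ, ∀ θ ∈ Θ, ∀ θ' ∈ Θ, |w ℓ θ - w ℓ θ'| ≤ αp * M * ‖θ - θ'‖) :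
    ∀ ℓ, ∀ θ ∈ Θ, ∀ θ' ∈ Θ,
      |w ℓ θ / (∑ j, w j θ) - w ℓ θ' / (∑ j, w j θ')| ≤
        (1 / K) * (αp / αm) * M * ‖θ - θ'‖ +
          (2 / K) * (αp / αm) ^ 3 * M * ‖θ - θ'‖ := by
  intro ℓ θ hθ θ' hθ'
  have hKpos : (0 : ℝ) < K := by exact_mod_cast hK
  have hαp : 0 < αp := lt_of_lt_of_le hαm hαmp
  have hlow : ∀ t ∈ Θ, K * αm ≤ ∑ j, w j t := by
    intro t ht
    have h := Finset.card_nsmul_le_sum Finset.univ (fun j => w j t) αm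
      (fun j _ => (hbound j t ht).1)
    simpa using h
  have hdiff : |∑ j, w j θ' - ∑ j, w j θ| ≤ K * (αp * M * ‖θ - θ'‖) := by
    rw [← Finset.sum_sub_distrib]
    refine (Finset.abs_sum_le_sum_abs _ _).trans ?_
    have h := Finset.sum_le_card_nsmul Finset.univ (fun j => |w j θ' - w j θ|)
      (αp * M * ‖θ - θ'‖) (fun j _ => by
        show |w j θ' - w j θ| ≤ _
        rw [abs_sub_comm]; exact hlip j θ hθ θ' hθ')
    simpa using h
  have hS := hlow θ hθ
  have hT := hlow θ' hθ'
  have hab := hlip ℓ θ hθ θ' hθ'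
  have hb := hbound ℓ θ' hθ'
  have hd : 0 ≤ ‖θ - θ'‖ := norm_nonneg _
  generalize (∑ j, w j θ) = S at *
  generalize (∑ j, w j θ') = T at *
  generalize ‖θ - θ'‖ = d at *
  generalize w ℓ θ = a at *
  generalize w ℓ θ' = b at *
  have hKm : 0 < K * αm := mul_pos hKpos hαm
  have hS0 : 0 < S := hKm.trans_le hS
  have hT0 : 0 < T := hKm.trans_le hT
  have hb0 : 0 < b := hαm.trans_le hb.1
  have e : a / S - b / T = (a - b) / S + b * (T - S) / (S * T) := by
    field_simp; ring
  have h1 : |(a - b) / S| ≤ (αp * M * d) / (K * αm) := by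
    rw [abs_div, abs_of_pos hS0]
    gcongr
  have h2 : |b * (T - S) / (S * T)| ≤
      αp * (K * (αp * M * d)) / ((K * αm) * (K * αm)) := by
    rw [abs_div, abs_mul, abs_of_pos hb0, abs_of_pos (mul_pos hS0 hT0)]
    have := hb.2
    gcongr
  have e1 : (αp * M * d) / (K * αm) = (1 / K) * (αp / αm) * M * d := by
    field_simp
  have e2 : αp * (K * (αp * M * d)) / ((K * αm) * (K * αm)) =
      (1 / K) * (αp / αm) ^ 2 * M * d := by
    field_simp
  have hr : 1 ≤ αp / αm := (one_le_div hαm).2 hαmp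
  have h3 : (1 / K) * (αp / αm) ^ 2 * M * d ≤ (2 / K) * (αp / αm) ^ 3 * M * d := by
    gcongr
    · norm_num
    · norm_num
  rw [e]
  refine (abs_add_le _ _).trans ?_
  rw [← e1]
  exact add_le_add h1 (h2.trans (e2.le.trans h3))
end

section
/- Let N ≥ 1 and let G : ℝ^{d₀} → ℝ^{d_N} be an N-layer feedforward network G(z) = f_N(W_N f_{N−1}(⋯ f_1(W_1 z + b_1) ⋯) + b_N), where W_i ∈ ℝ^{d_i × d_{i−1}}, b_i ∈ ℝ^{d_i}, and each activation map f_i : ℝ^{d_i} → ℝ^{d_i} is differentiable with sup_u ‖Df_i(u)‖ ≤ M_i and with u ↦ Df_i(u) Lipschitz with constant L_i (operator norms). Assume ‖W_i‖ ≤ a (spectral norm) for all i. Then G is differentiable, for all z ∈ ℝ^{d₀}: ‖DG(z)‖ ≤ a^N ∏_{j=1}^{N} M_j, and for all z, z' ∈ ℝ^{d₀}: ‖DG(z) − DG(z')‖ ≤ ( ∑_{k=1}^{N} L_k a^{N+k} ∏_{j=1}^{k−1} M_j² ∏_{j=k+1}^{N} M_j ) ‖z − z'‖. -/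
open Finset

/-- The `k`-layer feedforward network: `net d W b f k` applies the layers
`z ↦ f i (W i z + b i)` for `i = 0, …, k − 1` in order. -/
noncomputable def net (d : ℕ → ℕ)
    (W : ∀ k, EuclideanSpace ℝ (Fin (d k)) →L[ℝ] EuclideanSpace ℝ (Fin (d (k + 1))))
    (b : ∀ k, EuclideanSpace ℝ (Fin (d (k + 1))))
    (f : ∀ k, EuclideanSpace ℝ (Fin (d (k + 1))) → EuclideanSpace ℝ (Fin (d (k + 1)))) :
    ∀ k, EuclideanSpace ℝ (Fin (d 0)) → EuclideanSpace ℝ (Fin (d k))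
  | 0 => id
  | k + 1 => fun z => f k (W k (net d W b f k z) + b k)

/-- Boundedness and Lipschitz continuity of the input-derivative of an `N`-layer
feedforward network with weight norms at most `a` and activations with bounded,
Lipschitz derivatives. -/
theorem stmt_9 (N : ℕ) (hN : 1 ≤ N) (d : ℕ → ℕ)
    (W : ∀ k, EuclideanSpace ℝ (Fin (d k)) →L[ℝ] EuclideanSpace ℝ (Fin (d (k + 1))))
    (b : ∀ k, EuclideanSpace ℝ (Fin (d (k + 1))))
    (f : ∀ k, EuclideanSpace ℝ (Fin (d (k + 1))) → EuclideanSpace ℝ (Fin (d (k + 1))))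
    (a : ℝ) (M L : ℕ → ℝ)
    (ha : 0 ≤ a) (hM : ∀ k, 0 ≤ M k) (hL : ∀ k, 0 ≤ L k)
    (hW : ∀ k, ‖W k‖ ≤ a)
    (hf : ∀ k, Differentiable ℝ (f k))
    (hDf : ∀ k u, ‖fderiv ℝ (f k) u‖ ≤ M k)
    (hDfLip : ∀ k u u', ‖fderiv ℝ (f k) u - fderiv ℝ (f k) u'‖ ≤ L k * ‖u - u'‖) :
    Differentiable ℝ (net d W b f N) ∧
      (∀ z, ‖fderiv ℝ (net d W b f N) z‖ ≤ a ^ N * ∏ j ∈ Finset.range N, M j) ∧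
      (∀ z z', ‖fderiv ℝ (net d W b f N) z - fderiv ℝ (net d W b f N) z'‖ ≤
        (∑ k ∈ Finset.range N, L k * a ^ (N + k + 1) *
          (∏ j ∈ Finset.range k, M j ^ 2) * ∏ j ∈ Finset.Ico (k + 1) N, M j) *
          ‖z - z'‖) := by
  clear hN
  induction N with
  | zero =>
    have h0 : net d W b f 0 = id := rfl
    rw [h0]
    refine ⟨differentiable_id, ?_, ?_⟩
    · intro z
      rw [fderiv_id]
      simpa using ContinuousLinearMap.norm_id_le
    · intro z z'
      rw [fderiv_id, fderiv_id]
      simp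
  | succ n ih =>
    obtain ⟨hd, hB, hLip⟩ := ih
    have hP : 0 ≤ ∏ j ∈ Finset.range n, M j := Finset.prod_nonneg fun j _ => hM j
    set P : ℝ := ∏ j ∈ Finset.range n, M j with hPdef
    set S : ℝ := ∑ k ∈ Finset.range n, L k * a ^ (n + k + 1) *
          (∏ j ∈ Finset.range k, M j ^ 2) * ∏ j ∈ Finset.Ico (k + 1) n, M j with hS
    have hder : ∀ z, HasFDerivAt (net d W b f (n + 1))
        ((fderiv ℝ (f n) (W n (net d W b f n z) + b n)).comp
          ((W n).comp (fderiv ℝ (net d W b f n) z))) z := by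
      intro z
      have h1 : HasFDerivAt (fun z => W n (net d W b f n z) + b n)
          ((W n).comp (fderiv ℝ (net d W b f n) z)) z :=
        ((W n).hasFDerivAt.comp z (hd z).hasFDerivAt).add_const (b n)
      exact HasFDerivAt.comp z (hf n _).hasFDerivAt h1
    have hWD : ∀ z, ‖(W n).comp (fderiv ℝ (net d W b f n) z)‖ ≤ a * (a ^ n * P) := by
      intro z
      exact (ContinuousLinearMap.opNorm_comp_le _ _).trans
        (mul_le_mul (hW n) (hB z) (norm_nonneg _) ha)
    refine ⟨fun z => (hder z).differentiableAt, ?_, ?_⟩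
    · intro z
      rw [(hder z).fderiv, Finset.prod_range_succ, ← hPdef]
      calc _ ≤ _ := ContinuousLinearMap.opNorm_comp_le _ _
        _ ≤ M n * (a * (a ^ n * P)) :=
          mul_le_mul (hDf n _) (hWD z) (norm_nonneg _) (hM n)
        _ = _ := by ring
    · intro z z'
      have hnet : ‖net d W b f n z - net d W b f n z'‖ ≤ a ^ n * P * ‖z - z'‖ :=
        Convex.norm_image_sub_le_of_norm_fderiv_le (𝕜 := ℝ) (fun x _ => hd x)
          (fun x _ => hB x) convex_univ (Set.mem_univ z') (Set.mem_univ z)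
      have hu : ‖(W n (net d W b f n z) + b n) - (W n (net d W b f n z') + b n)‖
          ≤ a * (a ^ n * P * ‖z - z'‖) := by
        rw [add_sub_add_right_eq_sub, ← map_sub]
        exact ((W n).le_opNorm _).trans (mul_le_mul (hW n) hnet (norm_nonneg _) ha)
      have hsum : (∑ k ∈ Finset.range (n + 1), L k * a ^ (n + 1 + k + 1) *
          (∏ j ∈ Finset.range k, M j ^ 2) * ∏ j ∈ Finset.Ico (k + 1) (n + 1), M j)
          = M n * a * S + L n * a ^ (2 * n + 2) * P ^ 2 := by
        rw [Finset.sum_range_succ]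
        congr 1
        · rw [hS, Finset.mul_sum]
          refine Finset.sum_congr rfl fun k hk => ?_
          rw [Finset.prod_Ico_succ_top (Finset.mem_range.mp hk)]
          ring
        · rw [hPdef, Finset.prod_pow, Finset.Ico_self, Finset.prod_empty]
          ring
      rw [hsum, (hder z).fderiv, (hder z').fderiv]
      set A := fderiv ℝ (f n) (W n (net d W b f n z) + b n) with hA
      set A' := fderiv ℝ (f n) (W n (net d W b f n z') + b n) with hA'
      set D := fderiv ℝ (net d W b f n) z with hD
      set D' := fderiv ℝ (net d W b f n) z' with hD'
      have hsplit : A.comp ((W n).comp D) - A'.comp ((W n).comp D')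
          = (A - A').comp ((W n).comp D) + A'.comp ((W n).comp (D - D')) := by
        ext1 x
        simp
      have hAA : ‖A - A'‖ ≤ L n * (a * (a ^ n * P * ‖z - z'‖)) :=
        (hDfLip n _ _).trans (mul_le_mul_of_nonneg_left hu (hL n))
      have t1 : ‖(A - A').comp ((W n).comp D)‖
          ≤ L n * (a * (a ^ n * P * ‖z - z'‖)) * (a * (a ^ n * P)) :=
        (ContinuousLinearMap.opNorm_comp_le _ _).trans
          (mul_le_mul hAA (hWD z) (norm_nonneg _) ((norm_nonneg _).trans hAA))
      have t2 : ‖A'.comp ((W n).comp (D - D'))‖ ≤ M n * (a * (S * ‖z - z'‖)) :=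
        (ContinuousLinearMap.opNorm_comp_le _ _).trans
          (mul_le_mul (hDf n _) ((ContinuousLinearMap.opNorm_comp_le _ _).trans
            (mul_le_mul (hW n) (hLip z z') (norm_nonneg _) ha)) (norm_nonneg _) (hM n))
      rw [hsplit]
      calc _ ≤ _ := norm_add_le _ _
        _ ≤ _ := add_le_add t1 t2
        _ = _ := by ring
end

section
/- Let N ≥ 1 and consider the N-layer feedforward network, viewed as a function of its first-layer weight matrix W₁ with all other parameters fixed: G_{W₁}(z) = f_N(W_N f_{N−1}(⋯ f_1(W_1 z + b_1) ⋯) + b_N), where W_i ∈ ℝ^{d_i × d_{i−1}}, b_i ∈ ℝ^{d_i}, and each activation map f_i : ℝ^{d_i} → ℝ^{d_i} is differentiable with sup_u ‖Df_i(u)‖ ≤ M_i and with u ↦ Df_i(u) Lipschitz with constant L_i (operator norms). Assume ‖W_i‖ ≤ a (spectral norm) for all i, and restrict W₁ to matrices with ‖W₁‖ ≤ a. Fix z ∈ ℝ^{d₀}. Then the map W₁ ↦ G_{W₁}(z) is differentiable, its derivative satisfies ‖∇_{W₁} G_{W₁}(z)‖ ≤ ‖z‖ a^{N−1} ∏_{j=1}^{N}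 M_j, and for all admissible W₁, W₁': ‖∇_{W₁} G_{W₁}(z) − ∇_{W₁} G_{W₁'}(z)‖ ≤ ‖z‖² ( ∑_{k=1}^{N} L_k a^{N−2+k} ∏_{j=1}^{k−1} M_j² ∏_{j=k+1}^{N} M_j ) ‖W₁ − W₁'‖. -/
open Finset

theorem layer_step {X F G : Type*} [NormedAddCommGroup X] [NormedSpace ℝ X]
    [NormedAddCommGroup F] [NormedSpace ℝ F] [NormedAddCommGroup G] [NormedSpace ℝ G]
    (g : X → F) (A : F →L[ℝ] G) (b : G) (f : G → G) (a B C M L : ℝ)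
    (ha : 0 ≤ a) (hB : 0 ≤ B) (hM : 0 ≤ M) (hL : 0 ≤ L)
    (hA : ‖A‖ ≤ a) (hg : Differentiable ℝ g) (hgB : ∀ x, ‖fderiv ℝ g x‖ ≤ B)
    (hgC : ∀ x y, ‖fderiv ℝ g x - fderiv ℝ g y‖ ≤ C * ‖x - y‖)
    (hf : Differentiable ℝ f) (hfM : ∀ u, ‖fderiv ℝ f u‖ ≤ M)
    (hfL : ∀ u v, ‖fderiv ℝ f u - fderiv ℝ f v‖ ≤ L * ‖u - v‖) :
    Differentiable ℝ (fun x => f (A (g x) + b)) ∧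
    (∀ x, ‖fderiv ℝ (fun x => f (A (g x) + b)) x‖ ≤ M * (a * B)) ∧
    (∀ x y, ‖fderiv ℝ (fun x => f (A (g x) + b)) x - fderiv ℝ (fun x => f (A (g x) + b)) y‖
      ≤ (M * (a * C) + L * (a * B) ^ 2) * ‖x - y‖) := by
  have hd : ∀ x, HasFDerivAt (fun x => f (A (g x) + b))
      ((fderiv ℝ f (A (g x) + b)).comp (A.comp (fderiv ℝ g x))) x := by
    intro x
    have h1 : HasFDerivAt (fun x => A (g x) + b) (A.comp (fderiv ℝ g x)) x :=
      (A.hasFDerivAt.comp x (hg x).hasFDerivAt).add_const b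
    exact ((hf (A (g x) + b)).hasFDerivAt).comp x h1
  have hAg : ∀ T : X →L[ℝ] F, ∀ c, ‖T‖ ≤ c → ‖A.comp T‖ ≤ a * c := fun T c hT =>
    (A.opNorm_comp_le T).trans (mul_le_mul hA hT (norm_nonneg _) ha)
  refine ⟨fun x => (hd x).differentiableAt, fun x => ?_, fun x y => ?_⟩
  · rw [(hd x).fderiv]
    exact (ContinuousLinearMap.opNorm_comp_le _ _).trans
      (mul_le_mul (hfM _) (hAg _ _ (hgB x)) (norm_nonneg _) hM)
  · rw [(hd x).fderiv, (hd y).fderiv]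
    have hlip : ‖g x - g y‖ ≤ B * ‖x - y‖ :=
      Convex.norm_image_sub_le_of_norm_fderiv_le (𝕜 := ℝ) (s := Set.univ)
        (fun x _ => hg x) (fun x _ => hgB x) convex_univ (Set.mem_univ _) (Set.mem_univ _)
    have hu : ‖(A (g x) + b) - (A (g y) + b)‖ ≤ a * (B * ‖x - y‖) := by
      rw [add_sub_add_right_eq_sub, ← map_sub]
      exact (A.le_opNorm _).trans (mul_le_mul hA hlip (norm_nonneg _) ha)
    have e : (fderiv ℝ f (A (g x) + b)).comp (A.comp (fderiv ℝ g x))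
        - (fderiv ℝ f (A (g y) + b)).comp (A.comp (fderiv ℝ g y))
        = (fderiv ℝ f (A (g x) + b)).comp (A.comp (fderiv ℝ g x - fderiv ℝ g y))
        + (fderiv ℝ f (A (g x) + b) - fderiv ℝ f (A (g y) + b)).comp (A.comp (fderiv ℝ g y)) := by
      ext v
      simp
    rw [e]
    have h1 := (ContinuousLinearMap.opNorm_comp_le (fderiv ℝ f (A (g x) + b))
      (A.comp (fderiv ℝ g x - fderiv ℝ g y))).trans
      (mul_le_mul (hfM _) (hAg _ _ (hgC x y)) (norm_nonneg _) hM)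
    have h2 := (ContinuousLinearMap.opNorm_comp_le
      (fderiv ℝ f (A (g x) + b) - fderiv ℝ f (A (g y) + b)) (A.comp (fderiv ℝ g y))).trans
      (mul_le_mul ((hfL _ _).trans (mul_le_mul_of_nonneg_left hu hL)) (hAg _ _ (hgB y))
        (norm_nonneg _) (by positivity))
    refine (norm_add_le _ _).trans ((add_le_add h1 h2).trans (le_of_eq ?_))
    ring

/-- The `N`-layer network (`N = N' + 1 ≥ 1`) viewed as a function `Φ` of its first-layer
weight `V` (all other parameters fixed): `Φ V` is the result of applying the remaining
layers `2, …, N` to `f 0 (V z + b 0)`.  Its derivative with respect to `V` is bounded by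
`‖z‖ a^{N−1} ∏ M_j` and Lipschitz with constant
`‖z‖² ∑_{k=1}^{N} L_k a^{N−2+k} ∏_{j<k} M_j² ∏_{j>k} M_j` on `{V | ‖V‖ ≤ a}`. -/
theorem stmt_10 (N' : ℕ) (d : ℕ → ℕ)
    (W : ∀ k, EuclideanSpace ℝ (Fin (d k)) →L[ℝ] EuclideanSpace ℝ (Fin (d (k + 1))))
    (b : ∀ k, EuclideanSpace ℝ (Fin (d (k + 1))))
    (f : ∀ k, EuclideanSpace ℝ (Fin (d (k + 1))) → EuclideanSpace ℝ (Fin (d (k + 1))))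
    (a : ℝ) (M L : ℕ → ℝ)
    (ha : 0 ≤ a) (hM : ∀ k, 0 ≤ M k) (hL : ∀ k, 0 ≤ L k)
    (hW : ∀ k, ‖W k‖ ≤ a)
    (hf : ∀ k, Differentiable ℝ (f k))
    (hDf : ∀ k u, ‖fderiv ℝ (f k) u‖ ≤ M k)
    (hDfLip : ∀ k u u', ‖fderiv ℝ (f k) u - fderiv ℝ (f k) u'‖ ≤ L k * ‖u - u'‖)
    (z : EuclideanSpace ℝ (Fin (d 0)))
    (Φ : (EuclideanSpace ℝ (Fin (d 0)) →L[ℝ] EuclideanSpace ℝ (Fin (d 1))) →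
      EuclideanSpace ℝ (Fin (d (N' + 1))))
    (hΦ : ∀ V, Φ V =
      net (fun k => d (k + 1)) (fun k => W (k + 1)) (fun k => b (k + 1))
        (fun k => f (k + 1)) N' (f 0 (V z + b 0))) :
    Differentiable ℝ Φ ∧
      (∀ V, ‖V‖ ≤ a → ‖fderiv ℝ Φ V‖ ≤
        ‖z‖ * a ^ N' * ∏ j ∈ Finset.range (N' + 1), M j) ∧
      (∀ V V', ‖V‖ ≤ a → ‖V'‖ ≤ a →
        ‖fderiv ℝ Φ V - fderiv ℝ Φ V'‖ ≤
          ‖z‖ ^ 2 * (∑ k ∈ Finset.range (N' + 1), L k * a ^ (N' + k) *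
            (∏ j ∈ Finset.range k, M j ^ 2) * ∏ j ∈ Finset.Ico (k + 1) (N' + 1), M j) *
            ‖V - V'‖) := by
  have hΦ' := funext hΦ
  subst hΦ'
  clear hΦ
  suffices H : _ ∧ (∀ V, _) ∧ (∀ V V', _) from
    ⟨H.1, fun V _ => H.2.1 V, fun V V' _ _ => H.2.2 V V'⟩
  induction N' with
  | zero =>
    have h := layer_step (X := EuclideanSpace ℝ (Fin (d 0)) →L[ℝ] EuclideanSpace ℝ (Fin (d 1)))
      (fun V => V) (ContinuousLinearMap.apply ℝ (EuclideanSpace ℝ (Fin (d 1))) z) (b 0) (f 0)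
      ‖z‖ 1 0 (M 0) (L 0) (norm_nonneg _) zero_le_one (hM 0) (hL 0)
      (ContinuousLinearMap.opNorm_le_bound _ (norm_nonneg _) (fun V => by
        simpa [mul_comm] using V.le_opNorm z))
      differentiable_id (fun x => by
        rw [fderiv_fun_id]; exact ContinuousLinearMap.norm_id_le)
      (fun x y => by simp [fderiv_fun_id]) (hf 0) (hDf 0) (hDfLip 0)
    refine ⟨h.1, fun V => (h.2.1 V).trans (le_of_eq ?_),
      fun V V' => (h.2.2 V V').trans (le_of_eq ?_)⟩
    · simp; ring
    · congr 1
      simp; ring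
  | succ n ih =>
    obtain ⟨i1, i2, i3⟩ := ih
    have h := layer_step _ (W (n + 1)) (b (n + 1)) (f (n + 1)) a _ _ (M (n + 1)) (L (n + 1))
      ha (mul_nonneg (mul_nonneg (norm_nonneg z) (pow_nonneg ha n))
        (Finset.prod_nonneg fun j _ => hM j)) (hM _) (hL _) (hW _) i1 i2 i3
      (hf _) (hDf _) (hDfLip _)
    refine ⟨h.1, fun V => (h.2.1 V).trans (le_of_eq ?_),
      fun V V' => (h.2.2 V V').trans (le_of_eq ?_)⟩
    · rw [Finset.prod_range_succ _ (n + 1)]; ring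
    · congr 1
      rw [Finset.sum_range_succ _ (n + 1)]
      have e : ∑ k ∈ Finset.range (n + 1), L k * a ^ (n + 1 + k) *
            (∏ j ∈ Finset.range k, M j ^ 2) * ∏ j ∈ Finset.Ico (k + 1) (n + 1 + 1), M j
          = (M (n + 1) * a) * ∑ k ∈ Finset.range (n + 1), L k * a ^ (n + k) *
            (∏ j ∈ Finset.range k, M j ^ 2) * ∏ j ∈ Finset.Ico (k + 1) (n + 1), M j := by
        rw [Finset.mul_sum]
        refine Finset.sum_congr rfl fun k hk => ?_
        have hk' := Finset.mem_range.1 hk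
        rw [Finset.prod_Ico_succ_top (by omega)]
        ring
      rw [e, Finset.Ico_self, Finset.prod_empty, Finset.prod_pow]
      ring
end

section
/- Let s > 0 and s₁ ≤ s₂ be real numbers, and define the generalized soft-clipping function f : ℝ → ℝ by f(x) = (1/s) log( (1 + e^{s(x−s₁)}) / (1 + e^{s(x−s₂)}) ) + s₁. Then: (i) f is monotone nondecreasing; (ii) s₁ ≤ f(x) ≤ s₂ for all x ∈ ℝ; (iii) f is differentiable with f'(x) = σ(s(x−s₁)) − σ(s(x−s₂)) ∈ [0, 1], where σ(t) = 1/(1+e^{−t}), so f is 1-Lipschitz; and (iv) f' is (s/4)-Lipschitz, so f is smooth. -/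
/-- The generalized soft-clipping activation function
`f(x) = (1/s) log((1 + e^{s(x−s₁)})/(1 + e^{s(x−s₂)})) + s₁` is nondecreasing, bounded
between `s₁` and `s₂`, differentiable with derivative `σ(s(x−s₁)) − σ(s(x−s₂)) ∈ [0, 1]`
(hence 1-Lipschitz), and its derivative is `(s/4)`-Lipschitz. -/
theorem stmt_11 (s s₁ s₂ : ℝ) (hs : 0 < s) (h12 : s₁ ≤ s₂)
    (f : ℝ → ℝ)
    (hf : ∀ x, f x = (1 / s) *
      Real.log ((1 + Real.exp (s * (x - s₁))) / (1 + Real.exp (s * (x - s₂)))) + s₁)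
    (sig : ℝ → ℝ) (hsig : ∀ t, sig t = 1 / (1 + Real.exp (-t))) :
    Monotone f ∧
    (∀ x, s₁ ≤ f x ∧ f x ≤ s₂) ∧
    (∀ x, HasDerivAt f (sig (s * (x - s₁)) - sig (s * (x - s₂))) x) ∧
    (∀ x, sig (s * (x - s₁)) - sig (s * (x - s₂)) ∈ Set.Icc (0 : ℝ) 1) ∧
    (∀ x y, |f x - f y| ≤ |x - y|) ∧
    (∀ x y, |(sig (s * (x - s₁)) - sig (s * (x - s₂))) -
        (sig (s * (y - s₁)) - sig (s * (y - s₂)))| ≤ (s / 4) * |x - y|) := by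
  have mono : ∀ (g g' : ℝ → ℝ), (∀ x, HasDerivAt g (g' x) x) → (∀ x, 0 ≤ g' x) → Monotone g := by
    intro g g' h h0
    apply monotone_of_deriv_nonneg
    · exact fun x => (h x).differentiableAt
    · intro x
      rw [(h x).deriv]
      exact h0 x
  have sig0 : ∀ t, 0 < sig t := by
    intro t
    rw [hsig]
    positivity
  have sig1 : ∀ t, sig t ≤ 1 := by
    intro t
    rw [hsig, div_le_one (by positivity)]
    linarith [Real.exp_pos (-t)]
  have sigd : ∀ t, HasDerivAt sig (sig t * (1 - sig t)) t := by
    intro t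
    have e : sig = fun t => (1 + Real.exp (-t))⁻¹ := by
      funext t
      rw [hsig, one_div]
    have hp : (1 + Real.exp (-t)) ≠ 0 := by positivity
    have h1 : HasDerivAt (fun t : ℝ => 1 + Real.exp (-t)) (Real.exp (-t) * (-1)) t :=
      ((hasDerivAt_neg t).exp).const_add 1
    have h2 := h1.fun_inv hp
    rw [hsig, e]
    refine h2.congr_deriv ?_
    field_simp
    ring
  have sigm : Monotone sig := mono _ _ sigd fun t =>
    mul_nonneg (sig0 t).le (by linarith [sig1 t])
  have sigl : Monotone (fun t => t * (1/4) - sig t) := by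
    refine mono _ (fun t => 1 * (1/4) - sig t * (1 - sig t))
      (fun t => ((hasDerivAt_id t).mul_const (1/4)).sub (sigd t)) fun t => ?_
    nlinarith [sq_nonneg (sig t - 1/2)]
  have lg : ∀ c x, HasDerivAt (fun x => Real.log (1 + Real.exp (s * (x - c))))
      (s * sig (s * (x - c))) x := by
    intro c x
    have hp : (1 + Real.exp (s * (x - c))) ≠ 0 := by positivity
    have h1 : HasDerivAt (fun x : ℝ => 1 + Real.exp (s * (x - c)))
        (Real.exp (s * (x - c)) * (s * 1)) x :=
      ((((hasDerivAt_id x).sub_const c).const_mul s).exp).const_add 1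
    refine (h1.log hp).congr_deriv ?_
    rw [hsig, Real.exp_neg]
    have := Real.exp_pos (s * (x - c))
    field_simp
    ring
  have hf' : f = fun x => (1 / s) * (Real.log (1 + Real.exp (s * (x - s₁))) -
      Real.log (1 + Real.exp (s * (x - s₂)))) + s₁ := by
    funext x
    rw [hf, Real.log_div (by positivity) (by positivity)]
  have fd : ∀ x, HasDerivAt f (sig (s * (x - s₁)) - sig (s * (x - s₂))) x := by
    intro x
    rw [hf']
    refine ((((lg s₁ x).sub (lg s₂ x)).const_mul (1/s)).add_const s₁).congr_deriv ?_
    field_simp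
  have hle : ∀ x, s * (x - s₂) ≤ s * (x - s₁) := fun x =>
    mul_le_mul_of_nonneg_left (by linarith) hs.le
  have fi : ∀ x, sig (s * (x - s₁)) - sig (s * (x - s₂)) ∈ Set.Icc (0 : ℝ) 1 := fun x =>
    ⟨by linarith [sigm (hle x)], by linarith [sig1 (s * (x - s₁)), sig0 (s * (x - s₂))]⟩
  have fm : Monotone f := mono _ _ fd fun x => (fi x).1
  have fl : Monotone (fun x => x - f x) :=
    mono _ _ (fun x => (hasDerivAt_id x).sub (fd x)) fun x => by linarith [(fi x).2]
  refine ⟨fm, ?_, fd, fi, ?_, ?_⟩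
  · intro x
    have hE := Real.exp_le_exp.2 (hle x)
    have p2 := Real.exp_pos (s * (x - s₂))
    constructor
    · rw [hf]
      have : 0 ≤ Real.log ((1 + Real.exp (s * (x - s₁))) / (1 + Real.exp (s * (x - s₂)))) := by
        apply Real.log_nonneg
        rw [one_le_div (by positivity)]
        linarith
      have : 0 ≤ (1 / s) * Real.log ((1 + Real.exp (s * (x - s₁))) /
          (1 + Real.exp (s * (x - s₂)))) := by positivity
      linarith
    · rw [hf]
      have : Real.log ((1 + Real.exp (s * (x - s₁))) / (1 + Real.exp (s * (x - s₂))))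
          ≤ s * (s₂ - s₁) := by
        rw [Real.log_le_iff_le_exp (by positivity), div_le_iff₀ (by positivity), mul_add,
          ← Real.exp_add]
        have e1 : s * (s₂ - s₁) + s * (x - s₂) = s * (x - s₁) := by ring
        have e2 := Real.one_le_exp (mul_nonneg hs.le (sub_nonneg.2 h12))
        rw [e1]
        linarith
      have h3 := mul_le_mul_of_nonneg_left this (one_div_pos.2 hs).le
      have e3 : 1 / s * (s * (s₂ - s₁)) = s₂ - s₁ := by field_simp
      linarith
  · intro x y
    rcases le_total x y with h | h
    · have a := fm h
      have b := fl h
      simp only at b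
      rw [abs_of_nonpos (by linarith), abs_of_nonpos (by linarith)]
      linarith
    · have a := fm h
      have b := fl h
      simp only at b
      rw [abs_of_nonneg (by linarith), abs_of_nonneg (by linarith)]
      linarith
  · have key : ∀ x y, x ≤ y → ∀ c, 0 ≤ sig (s * (y - c)) - sig (s * (x - c)) ∧
        sig (s * (y - c)) - sig (s * (x - c)) ≤ s / 4 * (y - x) := by
      intro x y h c
      have h' : s * (x - c) ≤ s * (y - c) := mul_le_mul_of_nonneg_left (by linarith) hs.le
      have a := sigm h'
      have b := sigl h'
      simp only at b
      exact ⟨by linarith, by linarith⟩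
    intro x y
    rcases le_total x y with h | h
    · obtain ⟨a, b⟩ := key x y h s₁
      obtain ⟨c, d⟩ := key x y h s₂
      rw [abs_of_nonpos (by linarith : x - y ≤ 0), abs_le]
      constructor <;> linarith
    · obtain ⟨a, b⟩ := key y x h s₁
      obtain ⟨c, d⟩ := key y x h s₂
      rw [abs_of_nonneg (by linarith : 0 ≤ x - y), abs_le]
      constructor <;> linarith
end
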